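/- arXiv:2511.02138 — 2 statements merged into one kernel-verified Lean document; each statement's English description precedes it below -/
import Mathlib

section
/- Let m ≥ 1 and let f : ℤᵐ × Fin m → ℝ satisfy Σ_{(v,j)∈E} |f(v,j)| < ∞ (f ∈ ℓ¹(E)) and ∂f = 0 (the defining sums converging absolutely). Then the family of shifts {τ_u f}_{u∈ℤᵐ} is not a Riesz system in ℓ²(E): for every δ > 0 there exists a finitely supported a : ℤᵐ → ℝ with Σ_u a(u)² > 0 and ‖Σ_{u∈ℤᵐ} a(u)·τ_u f‖²_{ℓ²(E)} < δ·Σ_{u∈ℤᵐ} a(u)². Consequently, for m ≥ 2 there is no translation-invariant Riesz system in ℓ²(E) consisting of closed 1-cochains belonging to ℓ¹(E). -/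
/-- The `j`-th standard generator of `ℤᵐ`. -/
def latGen (m : ℕ) (j : Fin m) : Fin m → ℤ := Pi.single j 1

/-- The boundary of a 1-cochain `f` on the edge set `E = ℤᵐ × Fin m` of the standard
Cayley graph of `ℤᵐ` (the edge `(v,j)` going from `v` to `v + e_j`):
`∂f(v) = Σ_j (f(v − e_j, j) − f(v, j))`. -/
def latBdry (m : ℕ) (f : (Fin m → ℤ) × Fin m → ℝ) (v : Fin m → ℤ) : ℝ :=
  ∑ j : Fin m, (f (v - latGen m j, j) - f (v, j))

/-- The shift `τ_u f` of a 1-cochain by `u ∈ ℤᵐ`. -/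
def latShift (m : ℕ) (u : Fin m → ℤ) (f : (Fin m → ℤ) × Fin m → ℝ) :
    (Fin m → ℤ) × Fin m → ℝ :=
  fun e => f (e.1 - u, e.2)

/-!
The flux of a closed summable cochain through a hyperplane `{v | v j = k}` vanishes: pair `∂f = 0`
with the indicator of the half-space `{v | k < v j}` and sum by parts. Summing over `k` gives
`∑ v, f (v, j) = 0` for every direction `j`. Now convolve each `f (·, j)` with the `ℓ²`-normalized
indicator of a large box. Boxes form a Følner sequence, so the translates of this unit vector by `v`
are, for every fixed `v`, asymptotically equal to it; since `f (·, j)` is summable with total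
mass `0`, dominated convergence makes the convolution tend to `0` in `ℓ²`.

In a translation-invariant family with a lower Riesz bound every cochain `h` is nonzero, and a
nonzero summable function on the torsion-free group `ℤᵐ` has no period. So the shifts of `h` are
distinct members of the family, and they inherit a lower Riesz bound, ruled out by the first part.
-/

open Filter MeasureTheory Topology
open scoped Pointwise symmDiff

section BanachSpace

variable {α β 𝕜 X : Type*} [NormedField 𝕜] [NormedAddCommGroup X] [NormedSpace 𝕜 X]
  [CompleteSpace X] {l : Filter β} {g : α → 𝕜}

theorem tendsto_tsum_smul_zero_of_hasSum_zero (hg : Summable fun i => ‖g i‖) (hg0 : HasSum g 0)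
    {x : β → X} {y : β → α → X} {C : ℝ} (hx : ∀ n, ‖x n‖ ≤ C) (hy : ∀ n i, ‖y n i‖ ≤ C)
    (hyx : ∀ i, Tendsto (fun n => y n i - x n) l (𝓝 0)) :
    Tendsto (fun n => ∑' i, g i • y n i) l (𝓝 0) := by
  have bound (n i) : ‖g i • (y n i - x n)‖ ≤ ‖g i‖ * (C + C) := by
    rw [norm_smul]
    gcongr
    exact (norm_sub_le _ _).trans (add_le_add (hy n i) (hx n))
  have tsum_sub_smul (n) : ∑' i, g i • (y n i - x n) = ∑' i, g i • y n i := by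
    have hsub : Summable fun i => g i • (y n i - x n) :=
      .of_norm_bounded (hg.mul_right _) (bound n)
    have hconst : HasSum (fun i => g i • x n) 0 := by simpa using hg0.smul_const (x n)
    simpa [smul_sub] using (hsub.hasSum.add hconst).tsum_eq.symm
  have tendsto_tsum := tendsto_tsum_of_dominated_convergence (hg.mul_right (C + C))
    (fun i => (hyx i).const_smul (g i)) (.of_forall bound)
  simpa only [tsum_sub_smul, smul_zero, tsum_zero] using tendsto_tsum

end BanachSpace

theorem norm_inv_sqrt_smul {X : Type*} [NormedAddCommGroup X] [NormedSpace ℝ X] (x : X) (r : ℝ) :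
    ‖(√r)⁻¹ • x‖ = √(‖x‖ ^ 2 / r) := by
  rw [norm_smul, norm_inv, Real.norm_of_nonneg r.sqrt_nonneg, Real.sqrt_div (sq_nonneg _),
    Real.sqrt_sq (norm_nonneg x), inv_mul_eq_div]

theorem tsum_prod_fintype {α ι : Type*} [Fintype ι] {F : α × ι → ℝ} (hF : ∀ e, 0 ≤ F e)
    (hs : ∀ j, Summable fun a => F (a, j)) : ∑' e, F e = ∑ j, ∑' a, F (a, j) := by
  have hsum : Summable F := (summable_prod_of_nonneg hF).2
    ⟨fun a => .of_finite, by simpa using summable_sum fun j _ => hs j⟩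
  simp only [hsum.tsum_prod, tsum_fintype]
  exact Summable.tsum_finsetSum fun j _ => hs j

section IndicatorVector

variable {α : Type*}

theorem lp_two_norm_sq_eq_tsum (x : lp (fun _ : α => ℝ) 2) : ‖x‖ ^ 2 = ∑' i, x i ^ 2 := by
  simpa using lp.norm_rpow_eq_tsum (by norm_num) x

/-- The indicator function of a finite set `s`, as a vector of `ℓ²(α)`. -/
noncomputable def lpIndicator (s : Finset α) : lp (fun _ : α => ℝ) 2 :=
  ⟨(s : Set α).indicator 1, (memℓp_zero <| s.finite_toSet.subset
    Set.support_indicator_subset).of_exponent_ge zero_le⟩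

theorem lpIndicator_apply (s : Finset α) (i : α) :
    lpIndicator s i = (s : Set α).indicator 1 i := rfl

theorem norm_lpIndicator_sq (s : Finset α) : ‖lpIndicator s‖ ^ 2 = s.card := by
  classical
  rw [lp_two_norm_sq_eq_tsum, tsum_eq_sum (s := s) (by simp +contextual [lpIndicator_apply]),
    Finset.sum_congr rfl (g := fun _ => 1) (by simp +contextual [lpIndicator_apply])]
  simp

theorem norm_lpIndicator_sub_sq [DecidableEq α] (s t : Finset α) :
    ‖lpIndicator s - lpIndicator t‖ ^ 2 = (s ∆ t).card := by
  rw [← norm_lpIndicator_sq, lp_two_norm_sq_eq_tsum, lp_two_norm_sq_eq_tsum]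
  refine tsum_congr fun i => ?_
  simpa [lpIndicator_apply] using
    (Set.apply_indicator_symmDiff (g := fun x : ℝ => x ^ 2) (by simp) (s : Set α) t 1 i).symm

end IndicatorVector

theorem card_symmDiff_add_two_mul_card_inter {α : Type*} [DecidableEq α] (s t : Finset α) :
    (s ∆ t).card + 2 * (s ∩ t).card = s.card + t.card := by
  have card_union := Finset.card_union_of_disjoint (disjoint_sdiff_sdiff (x := s) (y := t))
  have hs := Finset.card_sdiff_add_card_inter s t
  have ht := Finset.card_sdiff_add_card_inter t s
  rw [Finset.inter_comm] at ht
  rw [symmDiff_def, Finset.sup_eq_union]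
  lia

section Foelner

variable {G β : Type*} [AddGroup G] {g : G → ℝ}

theorem tsum_smul_lpIndicator_vadd_apply [DecidableEq G] (Q : Finset G)
    (hg : Summable fun v => ‖g v‖) (w : G) :
    (∑' v, g v • lpIndicator (v +ᵥ Q)) w = ∑ u ∈ Q, g (w - u) := by
  have hnorm (v : G) : ‖lpIndicator (v +ᵥ Q)‖ = √Q.card := by
    rw [← Finset.card_vadd_finset v, ← norm_lpIndicator_sq, Real.sqrt_sq (norm_nonneg _)]
  have hs : Summable fun v => g v • lpIndicator (v +ᵥ Q) :=
    .of_norm_bounded (hg.mul_right √Q.card) fun v => by rw [norm_smul, hnorm]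
  have heval := (lp.evalCLM ℝ (fun _ : G => ℝ) 2 w).map_tsum hs
  have hterm (u : G) : (g (w - u) • lpIndicator ((w - u) +ᵥ Q)) w =
      (Q : Set G).indicator (fun u => g (w - u)) u := by
    by_cases hu : u ∈ Q <;> simp [lpIndicator_apply, Set.mem_vadd_set_iff_neg_vadd_mem, hu]
  calc (∑' v, g v • lpIndicator (v +ᵥ Q)) w
      = ∑' v, (g v • lpIndicator (v +ᵥ Q)) w := heval
    _ = ∑' u, (g (w - u) • lpIndicator ((w - u) +ᵥ Q)) w := ((Equiv.subLeft w).tsum_eq _).symm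
    _ = ∑ u ∈ Q, g (w - u) := by
        simp only [hterm]
        exact (tsum_subtype _ _).symm.trans (Finset.tsum_subtype' Q fun u => g (w - u))

theorem summable_sq_sum_translate (Q : Finset G) (hg : Summable fun v => ‖g v‖) :
    Summable fun w => (∑ u ∈ Q, g (w - u)) ^ 2 := by
  classical
  simpa [tsum_smul_lpIndicator_vadd_apply Q hg] using
    (lp.memℓp (∑' v, g v • lpIndicator (v +ᵥ Q))).summable (by norm_num)

variable [MeasurableSpace G] [MeasurableSingletonClass G] {l : Filter β} {Q : β → Finset G}

theorem isAddFoelner_count_finset_iff [DecidableEq G] :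
    IsAddFoelner G .count l (fun n => (Q n : Set G)) ↔ (∀ᶠ n in l, (Q n).Nonempty) ∧
      ∀ v : G, Tendsto (fun n => (((v +ᵥ Q n) ∆ Q n).card / (Q n).card : ℝ)) l (𝓝 0) := by
  have count_ne_zero (n) : Measure.count (Q n : Set G) ≠ 0 ↔ (Q n).Nonempty := by
    simp [Measure.count_apply_finset, Finset.nonempty_iff_ne_empty]
  have count_ne_top : ∀ᶠ n in l, Measure.count (Q n : Set G) ≠ ⊤ :=
    .of_forall fun n => by simp [Measure.count_apply_finset]
  have count_div (v : G) (n) : Measure.count ((v +ᵥ (Q n : Set G)) ∆ (Q n : Set G)) /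
      Measure.count (Q n : Set G) = (((v +ᵥ Q n) ∆ Q n).card / (Q n).card : ENNReal) := by
    rw [← Finset.coe_vadd_finset, ← Finset.coe_symmDiff, Measure.count_apply_finset,
      Measure.count_apply_finset]
  have div_ne_top (v : G) (n) : (((v +ᵥ Q n) ∆ Q n).card / (Q n).card : ENNReal) ≠ ⊤ := by
    rcases (Q n).eq_empty_or_nonempty with hQ | hQ
    · simp [hQ]
    · exact ENNReal.div_ne_top (ENNReal.natCast_ne_top _) (by simpa using hQ.ne_empty)
  have tendsto_iff (v : G) :
      Tendsto (fun n => (((v +ᵥ Q n) ∆ Q n).card / (Q n).card : ENNReal)) l (𝓝 0) ↔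
        Tendsto (fun n => (((v +ᵥ Q n) ∆ Q n).card / (Q n).card : ℝ)) l (𝓝 0) := by
    simpa using (ENNReal.tendsto_toReal_iff (div_ne_top v) ENNReal.zero_ne_top).symm
  simp only [isAddFoelner_iff, count_ne_zero, count_ne_top, count_div, tendsto_iff,
    (Q _).measurableSet, Filter.eventually_true, true_and]

theorem isAddFoelner_count_finset_of_tendsto_card_inter [DecidableEq G]
    (hQ : ∀ᶠ n in l, (Q n).Nonempty) (hinter : ∀ v : G,
      Tendsto (fun n => (((v +ᵥ Q n) ∩ Q n).card / (Q n).card : ℝ)) l (𝓝 1)) :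
    IsAddFoelner G .count l fun n => (Q n : Set G) := by
  refine isAddFoelner_count_finset_iff.2 ⟨hQ, fun v => ?_⟩
  have hlim : Tendsto (fun n => 2 * (1 - (((v +ᵥ Q n) ∩ Q n).card / (Q n).card : ℝ))) l
      (𝓝 (2 * (1 - 1))) := ((hinter v).const_sub 1).const_mul 2
  rw [sub_self, mul_zero] at hlim
  refine hlim.congr' (hQ.mono fun n hn => ?_)
  have card_ne_zero : ((Q n).card : ℝ) ≠ 0 := Nat.cast_ne_zero.2 hn.card_ne_zero
  have card_symmDiff := card_symmDiff_add_two_mul_card_inter (v +ᵥ Q n) (Q n)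
  rw [Finset.card_vadd_finset, ← @Nat.cast_inj ℝ] at card_symmDiff
  push_cast at card_symmDiff
  field_simp
  linarith

theorem tendsto_inv_sqrt_card_smul_lpIndicator_vadd_sub [DecidableEq G]
    (hQ : IsAddFoelner G .count l fun n => (Q n : Set G)) (v : G) :
    Tendsto (fun n => (√(Q n).card)⁻¹ • lpIndicator (v +ᵥ Q n) -
      (√(Q n).card)⁻¹ • lpIndicator (Q n)) l (𝓝 0) := by
  rw [tendsto_zero_iff_norm_tendsto_zero, ← Real.sqrt_zero]
  refine ((isAddFoelner_count_finset_iff.1 hQ).2 v).sqrt.congr fun n => ?_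
  rw [← smul_sub, norm_inv_sqrt_smul, norm_lpIndicator_sub_sq]

theorem tendsto_tsum_sq_sum_translate_div_card
    (hQ : IsAddFoelner G .count l fun n => (Q n : Set G))
    (hg : Summable fun v => ‖g v‖) (hg0 : HasSum g 0) :
    Tendsto (fun n => (∑' w, (∑ u ∈ Q n, g (w - u)) ^ 2) / (Q n).card) l (𝓝 0) := by
  classical
  have norm_le (n) (v : G) : ‖(√(Q n).card)⁻¹ • lpIndicator (v +ᵥ Q n)‖ ≤ 1 := by
    rw [norm_inv_sqrt_smul, norm_lpIndicator_sq, Finset.card_vadd_finset, Real.sqrt_le_one]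
    exact div_self_le_one _
  have norm_sq_eq (n) : ‖∑' v, g v • (√(Q n).card)⁻¹ • lpIndicator (v +ᵥ Q n)‖ ^ 2 =
      (∑' w, (∑ u ∈ Q n, g (w - u)) ^ 2) / (Q n).card := by
    have hcomm (v : G) : g v • (√(Q n).card)⁻¹ • lpIndicator (v +ᵥ Q n) =
        (√(Q n).card)⁻¹ • g v • lpIndicator (v +ᵥ Q n) := smul_comm ..
    rw [tsum_congr hcomm, tsum_const_smul'' (√(Q n).card)⁻¹, norm_inv_sqrt_smul,
      Real.sq_sqrt (by positivity), lp_two_norm_sq_eq_tsum]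
    simp_rw [tsum_smul_lpIndicator_vadd_apply _ hg]
  have tendsto_zero : Tendsto (fun n => ∑' v, g v • (√(Q n).card)⁻¹ • lpIndicator (v +ᵥ Q n)) l
      (𝓝 0) := by
    refine tendsto_tsum_smul_zero_of_hasSum_zero hg hg0 (fun n => ?_) norm_le
      (tendsto_inv_sqrt_card_smul_lpIndicator_vadd_sub hQ)
    simpa only [zero_vadd] using norm_le n 0
  have tendsto_norm_sq := (tendsto_zero.norm.pow 2).congr norm_sq_eq
  rwa [norm_zero, zero_pow two_ne_zero] at tendsto_norm_sq

theorem tendsto_tsum_sq_sum_shift_div_card {ι : Type*} [Finite ι] {f : G × ι → ℝ}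
    (hQ : IsAddFoelner G .count l fun n => (Q n : Set G))
    (hf : ∀ j, Summable fun v => ‖f (v, j)‖) (hf0 : ∀ j, HasSum (fun v => f (v, j)) 0) :
    Tendsto (fun n => (∑' e : G × ι, (∑ u ∈ Q n, f (e.1 - u, e.2)) ^ 2) / (Q n).card) l
      (𝓝 0) := by
  have := Fintype.ofFinite ι
  have tsum_div (n) : (∑' e : G × ι, (∑ u ∈ Q n, f (e.1 - u, e.2)) ^ 2) / (Q n).card =
      ∑ j, (∑' w, (∑ u ∈ Q n, f (w - u, j)) ^ 2) / (Q n).card := by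
    rw [tsum_prod_fintype (F := fun e : G × ι => (∑ u ∈ Q n, f (e.1 - u, e.2)) ^ 2)
      (fun _ => sq_nonneg _) fun j =>
        summable_sq_sum_translate (g := fun v => f (v, j)) (Q n) (hf j), Finset.sum_div]
  simpa only [tsum_div, Finset.sum_const_zero] using
    tendsto_finsetSum _ fun j _ => tendsto_tsum_sq_sum_translate_div_card hQ (hf j) (hf0 j)

end Foelner

section Box

variable {ι : Type*} [Fintype ι] [DecidableEq ι]

theorem card_vadd_Icc_inter_Icc (N : ℕ) (v : ι → ℤ) :
    ((v +ᵥ Finset.Icc (0 : ι → ℤ) N) ∩ Finset.Icc 0 N).card = ∏ i, (N + 1 - |v i|).toNat := by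
  have hinter : (v +ᵥ Finset.Icc (0 : ι → ℤ) N) ∩ Finset.Icc 0 N =
      Finset.Icc (v ⊔ 0) ((v + N) ⊓ N) := by
    ext w
    simp [← Finset.neg_vadd_mem_iff, and_and_and_comm]
  rw [hinter, Pi.card_Icc]
  refine Finset.prod_congr rfl fun i _ => ?_
  simp only [Pi.sup_apply, Pi.zero_apply, Pi.inf_apply, Pi.add_apply, Pi.natCast_apply,
    Int.card_Icc]
  grind

theorem tendsto_toNat_sub_abs_div (a : ℤ) :
    Tendsto (fun N : ℕ => ((N + 1 - |a|).toNat / (N + 1 : ℕ) : ℝ)) atTop (𝓝 1) := by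
  have hlim : Tendsto (fun N : ℕ => 1 - |(a : ℝ)| / (N + 1 : ℕ)) atTop (𝓝 1) := by
    simpa using ((tendsto_const_div_atTop_nhds_zero_nat |(a : ℝ)|).comp
      (tendsto_add_atTop_nat 1)).const_sub 1
  refine hlim.congr' ?_
  filter_upwards [eventually_ge_atTop a.natAbs] with N hN
  have toNat_cast : ((N + 1 - |a|).toNat : ℤ) = (N + 1 : ℕ) - |a| := by
    rw [Int.toNat_of_nonneg] <;> grind
  rw [← Int.cast_natCast (N + 1 - |a|).toNat, toNat_cast, Int.cast_sub,
    Int.cast_natCast, sub_div, Int.cast_abs, div_self (by positivity)]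

theorem isAddFoelner_count_Icc :
    IsAddFoelner (ι → ℤ) .count atTop fun N : ℕ => (Finset.Icc (0 : ι → ℤ) N : Set (ι → ℤ)) := by
  refine isAddFoelner_count_finset_of_tendsto_card_inter (.of_forall fun N => ?_) fun v => ?_
  · exact Finset.nonempty_Icc.2 fun _ => Int.natCast_nonneg N
  have card_div (N : ℕ) : (((v +ᵥ Finset.Icc (0 : ι → ℤ) N) ∩ Finset.Icc 0 N).card /
      (Finset.Icc (0 : ι → ℤ) N).card : ℝ) = ∏ i, ((N + 1 - |v i|).toNat / (N + 1 : ℕ) : ℝ) := by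
    simp [card_vadd_Icc_inter_Icc, Pi.card_Icc]
  simpa only [card_div, Finset.prod_const_one] using
    tendsto_finsetProd _ fun i _ => tendsto_toNat_sub_abs_div (v i)

end Box

section ClosedCochain

theorem hasSum_mul_translate_sub {G : Type*} [AddGroup G] {φ g : G → ℝ} {C : ℝ}
    (hφ : ∀ v, |φ v| ≤ C) (hg : Summable g) (c : G) :
    HasSum (fun v => φ v * (g (v - c) - g v)) (∑' v, (φ (v + c) - φ v) * g v) := by
  have summable_mul {ψ : G → ℝ} (hψ : ∀ v, |ψ v| ≤ C) : Summable fun v => ψ v * g v :=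
    .of_norm_bounded (hg.abs.mul_left C) fun v => by
      rw [Real.norm_eq_abs, abs_mul]
      exact mul_le_mul_of_nonneg_right (hψ v) (abs_nonneg _)
  have hshift := summable_mul fun v => hφ (v + c)
  have htranslate : HasSum (fun v => φ v * g (v - c)) (∑' v, φ (v + c) * g v) := by
    simpa [Function.comp_def] using (Equiv.subRight c).hasSum_iff.2 hshift.hasSum
  simpa only [mul_sub, sub_mul, hshift.tsum_sub (summable_mul hφ)] using
    htranslate.sub (summable_mul hφ).hasSum

variable {m : ℕ} {f : (Fin m → ℤ) × Fin m → ℝ}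

theorem summable_norm_slice (hf : Summable fun e => |f e|) (j : Fin m) :
    Summable fun v => ‖f (v, j)‖ :=
  hf.comp_injective (Prod.mk_left_injective j)

theorem hasSum_mul_latBdry {φ : (Fin m → ℤ) → ℝ} {C : ℝ} (hφ : ∀ v, |φ v| ≤ C)
    (hf : Summable fun e => |f e|) :
    HasSum (fun v => φ v * latBdry m f v)
      (∑ j, ∑' v, (φ (v + latGen m j) - φ v) * f (v, j)) := by
  simpa only [latBdry, Finset.mul_sum] using hasSum_sum fun j (_ : j ∈ Finset.univ) =>
    hasSum_mul_translate_sub hφ (summable_norm_slice hf j).of_norm (latGen m j)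

theorem tsum_hyperplane_eq_zero (hf : Summable fun e => |f e|) (hclosed : ∀ v, latBdry m f v = 0)
    (j : Fin m) (k : ℤ) : ∑' v : {v : Fin m → ℤ | v j = k}, f (v, j) = 0 := by
  let φ : (Fin m → ℤ) → ℝ := {v | k < v j}.indicator 1
  have hφ (v) : |φ v| ≤ 1 := by
    by_cases hv : k < v j <;> simp [φ, hv]
  have grad_of_ne {i : Fin m} (hi : i ≠ j) (v) : φ (v + latGen m i) - φ v = 0 := by
    simp [φ, latGen, Set.indicator_apply, hi]
  have grad_self (v) : (φ (v + latGen m j) - φ v) * f (v, j) =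
      {v : Fin m → ℤ | v j = k}.indicator (fun v => f (v, j)) v := by
    simp only [φ, latGen, Set.indicator_apply, Set.mem_ofPred_eq, Pi.add_apply,
      Pi.single_eq_same, Order.lt_add_one_iff, Pi.one_apply]
    grind
  have green := (hasSum_mul_latBdry hφ hf).tsum_eq
  rw [Finset.sum_eq_single j (by simp +contextual [grad_of_ne]) (by simp)] at green
  simpa [hclosed, tsum_congr grad_self, ← tsum_subtype] using green.symm

theorem hasSum_slice_zero (hf : Summable fun e => |f e|) (hclosed : ∀ v, latBdry m f v = 0)
    (j : Fin m) : HasSum (fun v => f (v, j)) 0 := by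
  have hsum := (summable_norm_slice hf j).of_norm.hasSum
  have hzero : (fun k => ∑' v : (fun v : Fin m → ℤ => v j) ⁻¹' {k}, f (v, j)) = 0 :=
    funext fun k => tsum_hyperplane_eq_zero hf hclosed j k
  have hfiber := hsum.tsum_fiberwise fun v => v j
  rw [hzero] at hfiber
  rwa [hfiber.unique hasSum_zero] at hsum

end ClosedCochain

section Riesz

theorem finsum_comp_of_injective {α β M : Type*} [AddCommMonoid M] {φ : α → β}
    (hφ : φ.Injective) {F : β → M} (hF : F.support ⊆ Set.range φ) :
    ∑ᶠ x, F (φ x) = ∑ᶠ b, F b := by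
  rw [← finsum_mem_range hφ, ← finsum_mem_univ F]
  exact finsum_mem_inter_support_eq F _ _ (by simpa using hF)

theorem finsum_indicator_one_mul {α R : Type*} [NonAssocSemiring R] (s : Finset α) (g : α → R) :
    ∑ᶠ i, (s : Set α).indicator 1 i * g i = ∑ i ∈ s, g i := by
  rw [← finsum_mem_coe_finset, finsum_mem_def]
  exact finsum_congr fun i => by by_cases hi : i ∈ s <;> simp [hi]

theorem eq_zero_of_periodic_of_summable {G A : Type*} [AddGroup G] [IsAddTorsionFree G]
    [AddCommGroup A] [TopologicalSpace A] [IsTopologicalAddGroup A] [T2Space A] {g : G → A}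
    (hg : Summable g) {c : G} (hper : Function.Periodic g c) (hc : c ≠ 0) : g = 0 := by
  funext v
  have hinj : Function.Injective fun n : ℕ => v + n • c := (add_right_injective v).comp
    (injective_nsmul_iff_not_isOfFinAddOrder.2 (not_isOfFinAddOrder_of_isAddTorsionFree hc))
  have hlim := hg.tendsto_cofinite_zero.comp hinj.tendsto_cofinite
  simp only [Function.comp_def, (hper.nsmul _ _)] at hlim
  exact tendsto_nhds_unique tendsto_const_nhds hlim

/-- The lower half of the Riesz condition in `ℓ²(E)`: the norm of a finite linear combination of the
`h i` controls its coefficients. A combination outside `ℓ²(E)` contributes the junk value `0` of the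
`tsum`, so the condition forces every `h i` to be square summable. -/
def HasLowerRieszBound {κ E : Type*} (h : κ → E → ℝ) : Prop :=
  ∃ C : ℝ, 0 < C ∧ ∀ a : κ → ℝ, (Function.support a).Finite →
    C⁻¹ * ∑ᶠ i, a i ^ 2 ≤ ∑' e, (∑ᶠ i, a i * h i e) ^ 2

namespace HasLowerRieszBound

variable {κ κ' E : Type*} {h : κ → E → ℝ}

theorem comp_injective (hh : HasLowerRieszBound h) {φ : κ' → κ} (hφ : φ.Injective) :
    HasLowerRieszBound (h ∘ φ) := by
  obtain ⟨C, hC, hbound⟩ := hh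
  refine ⟨C, hC, fun a ha => ?_⟩
  have hsupp : (φ.extend a 0).support ⊆ φ '' a.support := Function.support_extend_zero_subset
  have hrange := hsupp.trans (Set.image_subset_range φ _)
  have sum_sq := finsum_comp_of_injective hφ (F := fun i => φ.extend a 0 i ^ 2)
    fun i hi => hrange fun hzero => hi (by simp [hzero])
  have sum_mul (e) := finsum_comp_of_injective hφ (F := fun i => φ.extend a 0 i * h i e)
    fun i hi => hrange fun hzero => hi (by simp [hzero])
  simpa only [← sum_sq, ← sum_mul, Function.comp_apply, hφ.extend_apply] using
    hbound _ ((ha.image φ).subset hsupp)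

theorem ne_zero (hh : HasLowerRieszBound h) (i : κ) : h i ≠ 0 := by
  intro hi
  obtain ⟨C, hC, hbound⟩ :=
    hh.comp_injective (φ := fun _ : Unit => i) (Function.injective_of_subsingleton _)
  have hle : C⁻¹ ≤ 0 := by simpa [hi, finsum_unique] using hbound 1 (Set.toFinite _)
  exact hle.not_gt (inv_pos.2 hC)

end HasLowerRieszBound

end Riesz

section Shift

variable {m : ℕ} {f : (Fin m → ℤ) × Fin m → ℝ}

theorem exists_tsum_sq_latShift_lt (hf : Summable fun e => |f e|)
    (hclosed : ∀ v, latBdry m f v = 0) {δ : ℝ} (hδ : 0 < δ) :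
    ∃ a : (Fin m → ℤ) → ℝ, (Function.support a).Finite ∧ 0 < ∑ᶠ u, a u ^ 2 ∧
      ∑' e : (Fin m → ℤ) × Fin m, (∑ᶠ u, a u * latShift m u f e) ^ 2 < δ * ∑ᶠ u, a u ^ 2 := by
  have hlim := tendsto_tsum_sq_sum_shift_div_card isAddFoelner_count_Icc (summable_norm_slice hf)
    (hasSum_slice_zero hf hclosed)
  obtain ⟨N, hN⟩ := (hlim.eventually_lt_const hδ).exists
  set Q := Finset.Icc (0 : Fin m → ℤ) N
  have card_pos : (0 : ℝ) < Q.card := by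
    exact_mod_cast (Finset.nonempty_Icc.2 fun _ => Int.natCast_nonneg N).card_pos
  have sum_sq : ∑ᶠ u, (Q : Set (Fin m → ℤ)).indicator (1 : (Fin m → ℤ) → ℝ) u ^ 2 = Q.card := by
    simp only [sq, finsum_indicator_one_mul]
    rw [Finset.sum_congr rfl (g := fun _ => 1) (by simp +contextual)]
    simp
  refine ⟨(Q : Set (Fin m → ℤ)).indicator 1,
    Q.finite_toSet.subset Set.support_indicator_subset, ?_, ?_⟩
  · rwa [sum_sq]
  · rw [sum_sq]
    simpa only [finsum_indicator_one_mul, latShift] using (div_lt_iff₀ card_pos).1 hN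

theorem not_hasLowerRieszBound_latShift (hf : Summable fun e => |f e|)
    (hclosed : ∀ v, latBdry m f v = 0) : ¬ HasLowerRieszBound fun u => latShift m u f := by
  rintro ⟨C, hC, hbound⟩
  obtain ⟨a, ha, -, hlt⟩ := exists_tsum_sq_latShift_lt hf hclosed (inv_pos.2 hC)
  exact (hbound a ha).not_gt hlt

theorem latShift_injective (hf : Summable fun e => |f e|) (hne : f ≠ 0) :
    Function.Injective fun u => latShift m u f := by
  intro u u' huu'
  by_contra! hu
  have hper (j) : Function.Periodic (fun v => f (v, j)) (u - u') := fun v => by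
    simpa [latShift, add_sub_assoc] using (congrFun huu' (v + u, j)).symm
  have hslice (j) := eq_zero_of_periodic_of_summable (summable_norm_slice hf j).of_norm (hper j)
    (sub_ne_zero.2 hu)
  exact hne (funext fun e => congrFun (hslice e.2) e.1)

theorem not_hasLowerRieszBound_of_latShift_mem {F : Set ((Fin m → ℤ) × Fin m → ℝ)}
    (hne : F.Nonempty)
    (hF : ∀ h ∈ F, (Summable fun e => |h e|) ∧ ∀ v, latBdry m h v = 0)
    (hshift : ∀ h ∈ F, ∀ u : Fin m → ℤ, latShift m u h ∈ F) :
    ¬ HasLowerRieszBound fun h : F => h.1 := by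
  intro hRiesz
  obtain ⟨h, hh⟩ := hne
  obtain ⟨hl1, hclosed⟩ := hF h hh
  have hinj : Function.Injective fun u => (⟨latShift m u h, hshift h hh u⟩ : F) := fun u u' huu' =>
    latShift_injective hl1 (hRiesz.ne_zero ⟨h, hh⟩) (congrArg Subtype.val huu')
  exact not_hasLowerRieszBound_latShift hl1 hclosed (hRiesz.comp_injective hinj)

end Shift

theorem coexact_stmt_15_general (m : ℕ) (f : (Fin m → ℤ) × Fin m → ℝ)
    (hl1 : Summable fun e => |f e|) (hclosed : ∀ v, latBdry m f v = 0) :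
    (∀ δ : ℝ, 0 < δ → ∃ a : (Fin m → ℤ) → ℝ, (Function.support a).Finite ∧
      0 < ∑ᶠ u, a u ^ 2 ∧
      ∑' e : (Fin m → ℤ) × Fin m, (∑ᶠ u, a u * latShift m u f e) ^ 2 <
        δ * ∑ᶠ u, a u ^ 2) ∧
    ¬ ∃ F : Set ((Fin m → ℤ) × Fin m → ℝ), F.Nonempty ∧
      (∀ h ∈ F, (Summable fun e => |h e|) ∧ ∀ v, latBdry m h v = 0) ∧
      (∀ h ∈ F, ∀ u : Fin m → ℤ, latShift m u h ∈ F) ∧ HasLowerRieszBound fun h : F => h.1 :=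
  ⟨fun _ hδ => exists_tsum_sq_latShift_lt hl1 hclosed hδ, fun ⟨_, hne, hF, hshift, hRiesz⟩ =>
    not_hasLowerRieszBound_of_latShift_mem hne hF hshift hRiesz⟩

/-- For a closed 1-cochain `f ∈ ℓ¹(E)` on the standard Cayley graph of
`ℤᵐ`, the family of shifts `{τ_u f}` is not a Riesz system in `ℓ²(E)`; consequently, for
`m ≥ 2` there is no (nonempty) translation-invariant Riesz system in `ℓ²(E)` consisting
of closed 1-cochains belonging to `ℓ¹(E)`. -/
theorem coexact_stmt_15 (m : ℕ) (hm : 1 ≤ m) (f : (Fin m → ℤ) × Fin m → ℝ)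
    (hl1 : Summable fun e => |f e|) (hclosed : ∀ v, latBdry m f v = 0) :
    (∀ δ : ℝ, 0 < δ → ∃ a : (Fin m → ℤ) → ℝ, (Function.support a).Finite ∧
      0 < ∑ᶠ u, a u ^ 2 ∧
      ∑' e : (Fin m → ℤ) × Fin m, (∑ᶠ u, a u * latShift m u f e) ^ 2 <
        δ * ∑ᶠ u, a u ^ 2) ∧
    (2 ≤ m → ¬ ∃ F : Set ((Fin m → ℤ) × Fin m → ℝ), F.Nonempty ∧
      (∀ h ∈ F, (Summable fun e => |h e|) ∧ ∀ v, latBdry m h v = 0) ∧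
      (∀ h ∈ F, ∀ u : Fin m → ℤ, latShift m u h ∈ F) ∧
      ∃ C : ℝ, 0 < C ∧ ∀ a : F → ℝ, (Function.support a).Finite →
        C⁻¹ * ∑ᶠ h, a h ^ 2 ≤
            ∑' e : (Fin m → ℤ) × Fin m, (∑ᶠ h : F, a h * h.1 e) ^ 2 ∧
          ∑' e : (Fin m → ℤ) × Fin m, (∑ᶠ h : F, a h * h.1 e) ^ 2 ≤
            C * ∑ᶠ h, a h ^ 2) := by
  refine (coexact_stmt_15_general m f hl1 hclosed).imp_right fun hno _ => ?_
  exact fun ⟨F, hne, hF, hshift, C, hC, hbound⟩ =>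
    hno ⟨F, hne, hF, hshift, C, hC, fun a ha => (hbound a ha).1⟩
end

section
/- Let m ≥ 2 and consider the edge set E' = ℤᵐ × Fin (m+1) of the Cayley graph of ℤᵐ with the duplicated generating family (e₁, e₂, …, e_m, e₁): for j ∈ {0,…,m−1} the edge (v,j) goes from v to v + e_{j+1}, and the edge (v,m) goes from v to v + e₁. Define f : E' → ℝ by f(0,0) = 1, f(e₁,1) = 1, f(e₂,m) = −1, f(0,1) = −1, and f = 0 on all other edges (this is the closed 1-chain of the 4-cycle 0 → e₁ → e₁+e₂ → e₂ → 0 whose third edge uses the duplicated copy of e₁ reversed and whose fourth edge uses e₂ reversed). Then the family of shifts {τ_u f}_{u∈ℤᵐ} is a Riesz system in ℓ²(E'): there exists C ∈ (0,∞) such that for every finitely supported a : ℤᵐ → ℝ, C⁻¹·Σ_u a(u)² ≤ ‖Σ_{u∈ℤᵐ} a(u)·τ_u f‖²_{ℓ²(E')} ≤ C·Σ_u a(u)². -/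
/-- The closed 1-chain of the 4-cycle `0 → e₁ → e₁+e₂ → e₂ → 0` on the Cayley graph of
`ℤᵐ` with the duplicated generating family `(e₁, e₂, …, e_m, e₁)`; the edge set is
`E' = ℤᵐ × Fin (m+1)`, the edge `(v,j)` going from `v` to `v + e_{j+1}` for `j < m` and
the edge `(v,m)` going from `v` to `v + e₁` (the duplicated copy of `e₁`).  The third
edge of the 4-cycle uses the duplicated copy of `e₁` reversed and the fourth edge uses
`e₂` reversed:  `f(0,0) = 1`, `f(e₁,1) = 1`, `f(e₂,m) = −1`, `f(0,1) = −1`, and `f = 0`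
on all other edges. -/
def dupCochain (m : ℕ) (hm : 2 ≤ m) : (Fin m → ℤ) × Fin (m + 1) → ℝ :=
  fun e =>
    if e.1 = 0 ∧ e.2 = (⟨0, by omega⟩ : Fin (m + 1)) then 1
    else if e.1 = Pi.single (⟨0, by omega⟩ : Fin m) 1 ∧
        e.2 = (⟨1, by omega⟩ : Fin (m + 1)) then 1
    else if e.1 = Pi.single (⟨1, by omega⟩ : Fin m) 1 ∧ e.2 = Fin.last m then -1
    else if e.1 = 0 ∧ e.2 = (⟨1, by omega⟩ : Fin (m + 1)) then -1
    else 0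

/-!
If some label `j` carries exactly one edge `(w, j)` of the support of `f`, then the restriction
of `∑ u, a u • τ_u f` to the edges with label `j` is a translate of `a` multiplied by `f (w, j)`,
which gives the lower Riesz bound. The upper bound holds for every finitely supported `f`:
`∑ u, a u • τ_u f` is a sum of finitely many weighted translates of `a`, one for each edge in the
support of `f`. The 4-cycle crosses the label `0` exactly once.
-/

open Function

theorem hasSum_finsum_of_finite_support {V M : Type*} [AddCommMonoid M] [TopologicalSpace M]
    {g : V → M} (hg : (support g).Finite) : HasSum g (∑ᶠ v, g v) := by
  rw [finsum_eq_sum g hg]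
  exact hasSum_sum_of_ne_finset_zero fun v hv => by simpa using hv

theorem hasSum_ite_snd_eq {V J M : Type*} [DecidableEq J] [AddCommMonoid M]
    [TopologicalSpace M] {g : V → M} {s : M} (hg : HasSum g s) (j : J) :
    HasSum (fun e : V × J => if e.2 = j then g e.1 else 0) s := by
  rw [← (Prod.mk_left_injective j).hasSum_iff]
  · simpa only [comp_def, if_true] using hg
  · rintro ⟨v, k⟩ hk
    exact if_neg fun h => hk ⟨v, by rw [← h]⟩

section ShiftCombination

variable {V J : Type*} [AddGroup V] {f : V × J → ℝ} {a : V → ℝ} {w : V} {j : J}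

/-- The chain `∑ u, a u • τ_u f`, where `(τ_u f) (v, j) = f (v - u, j)`. The sum is a `finsum`, so
the coefficients `a` may have infinite support when `f` has finite support. -/
noncomputable def shiftCombination (f : V × J → ℝ) (a : V → ℝ) (e : V × J) : ℝ :=
  ∑ᶠ u, a u * f (e.1 - u, e.2)

theorem shiftCombination_eq_finsum (f : V × J → ℝ) (a : V → ℝ) (e : V × J) :
    shiftCombination f a e = ∑ᶠ v, a (-v + e.1) * f (v, e.2) := by
  rw [shiftCombination, ← finsum_comp_equiv (Equiv.subLeft e.1).symm]
  simp only [Equiv.subLeft_symm_apply, sub_eq_add_neg, neg_add_rev, neg_neg, add_neg_cancel_left]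

theorem shiftCombination_eq_sum [DecidableEq J] (hf : (support f).Finite) (a : V → ℝ)
    (e : V × J) :
    shiftCombination f a e =
      ∑ x ∈ hf.toFinset, if e.2 = x.2 then a (-x.1 + e.1) * f x else 0 := by
  classical
  have hinj : Injective fun v : V => (v, e.2) := Prod.mk_left_injective e.2
  rw [shiftCombination_eq_finsum,
    finsum_eq_sum_of_support_subset (s := hf.toFinset.preimage (·, e.2) hinj.injOn) _ fun v hv => by
      simpa using right_ne_zero_of_mul hv,
    Finset.sum_preimage' (·, e.2) _ hinj.injOn fun x => a (-x.1 + e.1) * f x, Finset.sum_filter]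
  simp only [Set.mem_range, Prod.ext_iff, exists_eq_left]

theorem shiftCombination_of_unique_edge (hw : ∀ v ≠ w, f (v, j) = 0) (a : V → ℝ) (u : V) :
    shiftCombination f a (w + u, j) = a u * f (w, j) := by
  rw [shiftCombination_eq_finsum,
    finsum_eq_single _ w fun v hv => by rw [hw v hv, mul_zero], neg_add_cancel_left]

theorem sq_shiftCombination_le [DecidableEq J] (hf : (support f).Finite) (a : V → ℝ)
    (e : V × J) :
    shiftCombination f a e ^ 2 ≤
      hf.toFinset.card *
        ∑ x ∈ hf.toFinset, if e.2 = x.2 then a (-x.1 + e.1) ^ 2 * f x ^ 2 else 0 := by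
  rw [shiftCombination_eq_sum hf]
  refine sq_sum_le_card_mul_sum_sq.trans_eq ?_
  simp only [ite_pow, mul_pow, zero_pow two_ne_zero]

theorem hasSum_sum_ite_translate_sq [DecidableEq J] (hf : (support f).Finite)
    (ha : Summable fun u => a u ^ 2) :
    HasSum (fun e : V × J => hf.toFinset.card *
        ∑ x ∈ hf.toFinset, if e.2 = x.2 then a (-x.1 + e.1) ^ 2 * f x ^ 2 else 0)
      (hf.toFinset.card * ∑ x ∈ hf.toFinset, (∑' u, a u ^ 2) * f x ^ 2) := by
  have htranslate (x : V × J) :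
      HasSum (fun v => a (-x.1 + v) ^ 2 * f x ^ 2) ((∑' u, a u ^ 2) * f x ^ 2) :=
    ((Equiv.addLeft (-x.1)).hasSum_iff.mpr ha.hasSum).mul_right _
  exact (hasSum_sum fun x _ => hasSum_ite_snd_eq (htranslate x) x.2).mul_left _

theorem summable_sq_shiftCombination (hf : (support f).Finite) (ha : Summable fun u => a u ^ 2) :
    Summable fun e => shiftCombination f a e ^ 2 := by
  classical
  exact .of_nonneg_of_le (fun _ => sq_nonneg _) (sq_shiftCombination_le hf a)
    (hasSum_sum_ite_translate_sq hf ha).summable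

theorem tsum_sq_shiftCombination_le (hf : (support f).Finite) (ha : Summable fun u => a u ^ 2) :
    ∑' e, shiftCombination f a e ^ 2 ≤
      (hf.toFinset.card * ∑ x ∈ hf.toFinset, f x ^ 2) * ∑' u, a u ^ 2 := by
  classical
  calc ∑' e, shiftCombination f a e ^ 2
      ≤ hf.toFinset.card * ∑ x ∈ hf.toFinset, (∑' u, a u ^ 2) * f x ^ 2 :=
        hasSum_le (sq_shiftCombination_le hf a) (summable_sq_shiftCombination hf ha).hasSum
          (hasSum_sum_ite_translate_sq hf ha)
    _ = (hf.toFinset.card * ∑ x ∈ hf.toFinset, f x ^ 2) * ∑' u, a u ^ 2 := by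
        rw [← Finset.mul_sum]; ring

theorem sq_mul_tsum_sq_le_tsum_sq_shiftCombination (hf : (support f).Finite)
    (hw : ∀ v ≠ w, f (v, j) = 0) (ha : Summable fun u => a u ^ 2) :
    f (w, j) ^ 2 * ∑' u, a u ^ 2 ≤ ∑' e, shiftCombination f a e ^ 2 := by
  have hinj : Injective fun u => (w + u, j) :=
    (Prod.mk_left_injective j).comp (add_right_injective w)
  calc f (w, j) ^ 2 * ∑' u, a u ^ 2
      = ∑' u, shiftCombination f a (w + u, j) ^ 2 := by
        simp only [shiftCombination_of_unique_edge hw, mul_pow, tsum_mul_right, mul_comm]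
    _ ≤ ∑' e, shiftCombination f a e ^ 2 :=
        tsum_comp_le_tsum_of_inj (summable_sq_shiftCombination hf ha) (fun _ => sq_nonneg _) hinj

end ShiftCombination

theorem coexact_stmt_16_general {V J : Type*} [AddGroup V] {f : V × J → ℝ} {w : V} {j : J}
    (hf : (support f).Finite) (hwj : f (w, j) ≠ 0) (hw : ∀ v ≠ w, f (v, j) = 0) :
    ∃ C : ℝ, 0 < C ∧ ∀ a : V → ℝ, Summable (fun u => a u ^ 2) →
      Summable (fun e : V × J => (∑ᶠ u, a u * f (e.1 - u, e.2)) ^ 2) ∧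
        C⁻¹ * ∑' u, a u ^ 2 ≤ ∑' e : V × J, (∑ᶠ u, a u * f (e.1 - u, e.2)) ^ 2 ∧
        ∑' e : V × J, (∑ᶠ u, a u * f (e.1 - u, e.2)) ^ 2 ≤ C * ∑' u, a u ^ 2 := by
  have hc : 0 < f (w, j) ^ 2 := by positivity
  set K : ℝ := hf.toFinset.card * ∑ x ∈ hf.toFinset, f x ^ 2
  refine ⟨max (f (w, j) ^ 2)⁻¹ K, lt_max_of_lt_left (inv_pos.mpr hc), fun a ha =>
    ⟨summable_sq_shiftCombination hf ha, ?_, ?_⟩⟩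
  · have hlower : (max (f (w, j) ^ 2)⁻¹ K)⁻¹ ≤ f (w, j) ^ 2 :=
      inv_le_of_inv_le₀ hc (le_max_left ..)
    exact (mul_le_mul_of_nonneg_right hlower (tsum_nonneg fun _ => sq_nonneg _)).trans
      (sq_mul_tsum_sq_le_tsum_sq_shiftCombination hf hw ha)
  · exact (tsum_sq_shiftCombination_le hf ha).trans
      (mul_le_mul_of_nonneg_right (le_max_right ..) (tsum_nonneg fun _ => sq_nonneg _))

theorem support_dupCochain_finite {m : ℕ} (hm : 2 ≤ m) : (support (dupCochain m hm)).Finite := by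
  refine Set.Finite.subset (s := {(0, ⟨0, by omega⟩), (Pi.single ⟨0, by omega⟩ 1, ⟨1, by omega⟩),
    (Pi.single ⟨1, by omega⟩ 1, Fin.last m), (0, ⟨1, by omega⟩)}) (Set.toFinite _) fun e he => ?_
  contrapose! he
  simp only [Set.mem_insert_iff, Set.mem_singleton_iff, Prod.ext_iff, not_or] at he
  obtain ⟨h₁, h₂, h₃, h₄⟩ := he
  rw [notMem_support, dupCochain, if_neg h₁, if_neg h₂, if_neg h₃, if_neg h₄]

theorem dupCochain_zero_right {m : ℕ} (hm : 2 ≤ m) (v : Fin m → ℤ) :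
    dupCochain m hm (v, 0) = if v = 0 then 1 else 0 := by
  have h0 : (⟨0, by omega⟩ : Fin (m + 1)) = 0 := rfl
  have h1 : (0 : Fin (m + 1)) ≠ ⟨1, by omega⟩ := by simp [Fin.ext_iff]
  have hlast : (0 : Fin (m + 1)) ≠ Fin.last m :=
    Fin.ne_of_val_ne (by rw [Fin.val_zero, Fin.val_last]; omega)
  simp only [dupCochain, h0, h1, hlast, and_true, and_false, if_false]

/-- For `m ≥ 2`, the family of `ℤᵐ`-shifts of the 4-cycle 1-chain
`dupCochain` (on the Cayley graph of `ℤᵐ` with a duplicated generator) is a Riesz system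
in `ℓ²(E')`. -/
theorem coexact_stmt_16 (m : ℕ) (hm : 2 ≤ m) :
    ∃ C : ℝ, 0 < C ∧ ∀ a : (Fin m → ℤ) → ℝ, (Function.support a).Finite →
      C⁻¹ * ∑ᶠ u, a u ^ 2 ≤
          ∑' e : (Fin m → ℤ) × Fin (m + 1),
            (∑ᶠ u, a u * dupCochain m hm (e.1 - u, e.2)) ^ 2 ∧
        ∑' e : (Fin m → ℤ) × Fin (m + 1),
            (∑ᶠ u, a u * dupCochain m hm (e.1 - u, e.2)) ^ 2 ≤
          C * ∑ᶠ u, a u ^ 2 := by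
  obtain ⟨C, hC, hriesz⟩ := coexact_stmt_16_general (w := 0) (j := 0)
    (support_dupCochain_finite hm) (by simp [dupCochain_zero_right])
    fun v hv => by rw [dupCochain_zero_right, if_neg hv]
  refine ⟨C, hC, fun a ha => ?_⟩
  have hsum : HasSum (fun u => a u ^ 2) (∑ᶠ u, a u ^ 2) :=
    hasSum_finsum_of_finite_support (by rwa [support_pow a two_ne_zero])
  rw [← hsum.tsum_eq]
  exact (hriesz a hsum.summable).2
end
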